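/- Let $V$ be a Lie algebra over a field $\mathbb{K}$ of characteristic zero, with universal enveloping algebra $U(V)$ and canonical filtration $U(V)^{\leq n}$ by images of $T^{\leq n}V = \bigoplus_{m=0}^n V^{\otimes m}$. Then for each $n \geq 0$ there is a short exact sequence of vector spaces $0 \to U(V)^{\leq n} \to U(V)^{\leq n+1} \to S^{n+1}(V) \to 0$, where $S^{n+1}(V) = V^{\otimes n+1}/\Sigma_{n+1}$ is the $(n+1)$-st symmetric power (coinvariants of the permutation action). -/

import Mathlib

/-- The canonical (PBW) filtration of the universal enveloping algebra: `ueaFiltration K L n`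
is the span of products of at most `n` elements in the image of `ι : L → U(L)`. -/
def ueaFiltration (K L : Type*) [Field K] [LieRing L] [LieAlgebra K L] (n : ℕ) :
    Submodule K (UniversalEnvelopingAlgebra K L) :=
  Submodule.span K {x | ∃ (m : ℕ) (f : Fin m → L), m ≤ n ∧
    x = (List.ofFn fun i =>
      (UniversalEnvelopingAlgebra.ι K (f i) : UniversalEnvelopingAlgebra K L)).prod}

/-- The submodule of the `(n+1)`-st tensor power spanned by `f₁⊗⋯⊗f_{n+1} - f_{σ1}⊗⋯⊗f_{σ(n+1)}`,
so that the quotient is the symmetric power `S^{n+1}(L)` (coinvariants of `Σ_{n+1}`). -/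
def symRelSpan (K L : Type*) [Field K] [LieRing L] [LieAlgebra K L] (n : ℕ) :
    Submodule K (TensorPower K (n + 1) L) :=
  Submodule.span K {x | ∃ (σ : Equiv.Perm (Fin (n + 1))) (f : Fin (n + 1) → L),
    x = PiTensorProduct.tprod K f - PiTensorProduct.tprod K (f ∘ σ)}

/-!
Multiplication in `U(L)` induces a natural surjection of `S^{n+1}(L)` onto
`U(L)^{≤n+1} / U(L)^{≤n}`. To invert it, let `L` act on the polynomial ring in an ordered basis of
`L` as left multiplication would act on ordered monomials: this is ordinary multiplication plus a
correction which does not raise the degree and which the commutation relations determine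
recursively. The curvature of this action (its failure to respect brackets) vanishes by induction on
the degree, because of the Bianchi identity. So `U(L)` acts as well, and its action on `1` sends
`ι x₁ ⋯ ι xₘ` to `x₁ ⋯ xₘ` modulo lower degree; the component of degree `n + 1` is the inverse
sought.
-/

namespace PBW

open MvPolynomial UniversalEnvelopingAlgebra

attribute [local instance] LieRing.ofAssociativeRing

section Monomials

variable {R I : Type*} [CommSemiring R]

lemma monomial_mem_restrictTotalDegree {J : I →₀ ℕ} {d : ℕ} (h : J.degree ≤ d) :
    (monomial J 1 : MvPolynomial I R) ∈ restrictTotalDegree I R d :=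
  (monomial_mem_restrictSupport R).2 (.inl h)

lemma restrictTotalDegree_eq_span (d : ℕ) : restrictTotalDegree I R d =
    Submodule.span R ((monomial · (1 : R)) '' {J : I →₀ ℕ | J.degree ≤ d}) :=
  restrictSupport_eq_span R _

lemma restrictTotalDegree_mono : Monotone (restrictTotalDegree I R) := fun _ _ hde _ hp ↦ by
  rw [mem_restrictTotalDegree] at hp ⊢
  exact hp.trans hde

lemma X_mul_monomial (i : I) (J : I →₀ ℕ) :
    (X i * monomial J 1 : MvPolynomial I R) = monomial (Finsupp.single i 1 + J) 1 := by
  simp [X, monomial_mul]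

lemma constr_monomial {M : Type*} [AddCommMonoid M] [Module R M] (f : (I →₀ ℕ) → M)
    (J : I →₀ ℕ) : (basisMonomials I R).constr R f (monomial J 1) = f J := by
  simpa using (basisMonomials I R).constr_basis R f J

lemma forall_mem_support_single_add {i : I} {J : I →₀ ℕ} {P : I → Prop} :
    (∀ k ∈ (Finsupp.single i 1 + J).support, P k) ↔ P i ∧ ∀ k ∈ J.support, P k := by
  classical
  simp [Finsupp.support_add_eq_union]

lemma exists_eq_single_add [LinearOrder I] {J : I →₀ ℕ} (hJ : J ≠ 0) :
    ∃ j M, J = Finsupp.single j 1 + M ∧ ∀ k ∈ M.support, j ≤ k := by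
  have hne : J.support.Nonempty := Finsupp.support_nonempty_iff.2 hJ
  have hmin : J (J.support.min' hne) ≠ 0 := Finsupp.mem_support_iff.1 (J.support.min'_mem hne)
  refine ⟨J.support.min' hne, J - Finsupp.single (J.support.min' hne) 1, ?_, fun k hk ↦ ?_⟩
  · rw [add_tsub_cancel_of_le (Finsupp.single_le_iff.2 (Nat.one_le_iff_ne_zero.2 hmin))]
  · exact J.support.min'_le k (Finsupp.support_mono tsub_le_self hk)

lemma le_or_exists_eq_single_add [LinearOrder I] (i : I) (J : I →₀ ℕ) :
    (∀ k ∈ J.support, i ≤ k) ∨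
      ∃ j M, J = Finsupp.single j 1 + M ∧ j < i ∧ ∀ k ∈ M.support, j ≤ k := by
  rcases eq_or_ne J 0 with rfl | hJ
  · simp
  obtain ⟨j, M, rfl, hM⟩ := exists_eq_single_add hJ
  rcases le_or_gt i j with hij | hji
  · exact .inl (forall_mem_support_single_add.2 ⟨hij, fun k hk ↦ hij.trans (hM k hk)⟩)
  · exact .inr ⟨j, M, rfl, hji, hM⟩

lemma exists_perm_of_sum_single_eq {α : Type*} [Fintype α] {v w : α → I}
    (h : ∑ a, Finsupp.single (v a) 1 = ∑ a, (Finsupp.single (w a) 1 : I →₀ ℕ)) :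
    ∃ σ : Equiv.Perm α, v = w ∘ σ := by
  classical
  have hcard (c : I) : Nonempty ({a // v a = c} ≃ {a // w a = c}) := by
    rw [← Fintype.card_eq, Fintype.card_subtype, Fintype.card_subtype]
    simpa [Finsupp.single_apply] using DFunLike.congr_fun h c
  exact ⟨Equiv.ofFiberEquiv fun c ↦ (hcard c).some,
    funext fun a ↦ (Equiv.ofFiberEquiv_map _ a).symm⟩

end Monomials

section Curvature

variable {R L A : Type*} [CommRing R] [LieRing L] [LieAlgebra R L] [LieRing A] [LieAlgebra R A]

/-- The curvature `⁅ρ x, ρ y⁆ - ρ ⁅x, y⁆` of a linear map between Lie algebras; it vanishes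
exactly when `ρ` is a Lie algebra homomorphism. -/
def curvature (ρ : L →ₗ[R] A) : L →ₗ[R] L →ₗ[R] A :=
  (LieModule.toEnd R A A : A →ₗ[R] Module.End R A).compl₁₂ ρ ρ -
    (LieModule.toEnd R L L : L →ₗ[R] Module.End R L).compr₂ ρ

lemma curvature_apply (ρ : L →ₗ[R] A) (x y : L) :
    curvature ρ x y = ⁅ρ x, ρ y⁆ - ρ ⁅x, y⁆ := rfl

lemma curvature_self (ρ : L →ₗ[R] A) (x : L) : curvature ρ x x = 0 := by
  simp [curvature_apply]

lemma curvature_skew (ρ : L →ₗ[R] A) (x y : L) : -curvature ρ y x = curvature ρ x y := by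
  rw [curvature_apply, curvature_apply, ← lie_skew (ρ x), ← lie_skew x, map_neg, neg_sub_neg,
    neg_sub]

lemma lie_lie_cyclic (x y z : L) : ⁅⁅x, y⁆, z⁆ + ⁅⁅y, z⁆, x⁆ + ⁅⁅z, x⁆, y⁆ = 0 := by
  rw [← lie_skew ⁅x, y⁆, ← lie_skew ⁅y, z⁆, ← lie_skew ⁅z, x⁆, ← neg_add, ← neg_add, neg_eq_zero,
    lie_jacobi]

lemma curvature_bianchi (ρ : L →ₗ[R] A) (x y z : L) :
    ⁅curvature ρ x y, ρ z⁆ + curvature ρ ⁅x, y⁆ z +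
      (⁅curvature ρ y z, ρ x⁆ + curvature ρ ⁅y, z⁆ x) +
      (⁅curvature ρ z x, ρ y⁆ + curvature ρ ⁅z, x⁆ y) = 0 := by
  have telescope (x y z : L) : ⁅curvature ρ x y, ρ z⁆ + curvature ρ ⁅x, y⁆ z =
      ⁅⁅ρ x, ρ y⁆, ρ z⁆ - ρ ⁅⁅x, y⁆, z⁆ := by
    simp only [curvature_apply, sub_lie, sub_add_sub_cancel]
  rw [telescope, telescope, telescope, sub_add_sub_comm, sub_add_sub_comm, ← map_add, ← map_add,
    lie_lie_cyclic, lie_lie_cyclic, map_zero, sub_zero]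

end Curvature

section TwistedMul

variable {R V I : Type*} [CommRing R] [AddCommGroup V] [Module R V] (b : Module.Basis I R V)

lemma apply_apply_mem_of_basis {M : Type*} [AddCommGroup M] [Module R M] {N : Submodule R M}
    (f : V →ₗ[R] MvPolynomial I R →ₗ[R] M) {d : ℕ}
    (h : ∀ i J, J.degree ≤ d → f (b i) (monomial J 1) ∈ N) (x : V) {p : MvPolynomial I R}
    (hp : p ∈ restrictTotalDegree I R d) : f x p ∈ N := by
  have hmonomial (J : I →₀ ℕ) (hJ : J.degree ≤ d) : f x (monomial J 1) ∈ N := by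
    have hspan : Submodule.span R (Set.range b) ≤ N.comap (f.flip (monomial J 1)) :=
      Submodule.span_le.2 (Set.range_subset_iff.2 fun i ↦ h i J hJ)
    exact hspan (b.mem_span x)
  have hspan : restrictTotalDegree I R d ≤ N.comap (f x) := by
    rw [restrictTotalDegree_eq_span, Submodule.span_le]
    rintro _ ⟨J, hJ, rfl⟩
    exact hmonomial J hJ
  exact hspan hp

lemma apply_apply_eq_of_basis {M : Type*} [AddCommGroup M] [Module R M]
    {f g : V →ₗ[R] MvPolynomial I R →ₗ[R] M} {d : ℕ}
    (h : ∀ i J, J.degree ≤ d → f (b i) (monomial J 1) = g (b i) (monomial J 1)) (x : V)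
    {p : MvPolynomial I R} (hp : p ∈ restrictTotalDegree I R d) : f x p = g x p := by
  refine sub_eq_zero.1 ?_
  exact apply_apply_mem_of_basis b (N := ⊥) (f - g) (fun i J hJ ↦ sub_eq_zero.2 (h i J hJ)) x hp

/-- The linear polynomial with the same coordinates as an element of `V`, i.e. the inclusion of
`V` into its symmetric algebra `R[X_i]`. -/
noncomputable def linearForm : V →ₗ[R] MvPolynomial I R := b.constr R X

@[simp]
lemma linearForm_basis (i : I) : linearForm b (b i) = X i := b.constr_basis R X i

/-- The action of `V` on polynomials by multiplication, twisted by a correction term `C`. -/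
noncomputable def twistedMul (C : V →ₗ[R] Module.End R (MvPolynomial I R)) :
    V →ₗ[R] Module.End R (MvPolynomial I R) :=
  LinearMap.mul R (MvPolynomial I R) ∘ₗ linearForm b + C

lemma twistedMul_apply (C : V →ₗ[R] Module.End R (MvPolynomial I R)) (x : V)
    (p : MvPolynomial I R) : twistedMul b C x p = linearForm b x * p + C x p := rfl

lemma linearForm_mul_mem (x : V) {d : ℕ} {p : MvPolynomial I R}
    (hp : p ∈ restrictTotalDegree I R d) :
    linearForm b x * p ∈ restrictTotalDegree I R (d + 1) := by
  refine apply_apply_mem_of_basis b (LinearMap.mul R (MvPolynomial I R) ∘ₗ linearForm b)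
    (fun i J hJ ↦ ?_) x hp
  simp only [LinearMap.comp_apply, LinearMap.mul_apply', linearForm_basis, X_mul_monomial]
  apply monomial_mem_restrictTotalDegree
  rw [map_add, Finsupp.degree_single]
  lia

/-- A family of operators on polynomials, none of which raises the total degree. -/
def DegreeNonincreasing (C : V →ₗ[R] Module.End R (MvPolynomial I R)) : Prop :=
  ∀ d x, ∀ p ∈ restrictTotalDegree I R d, C x p ∈ restrictTotalDegree I R d

variable {b} in
lemma DegreeNonincreasing.twistedMul_mem {C : V →ₗ[R] Module.End R (MvPolynomial I R)}
    (hC : DegreeNonincreasing C) (x : V) {d : ℕ} {p : MvPolynomial I R}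
    (hp : p ∈ restrictTotalDegree I R d) :
    twistedMul b C x p ∈ restrictTotalDegree I R (d + 1) :=
  add_mem (linearForm_mul_mem b x hp) (restrictTotalDegree_mono d.le_succ (hC d x p hp))

end TwistedMul

section Action

variable {R L I : Type*} [CommRing R] [LieRing L] [LieAlgebra R L] [LinearOrder I]
  (b : Module.Basis I R L)

/-- The correction forced by commutation relations.  If the smallest variable `X_j` of `X^J`
satisfies `j < i`, write `X^J = X_j X^M`; the relation `b_i b_j = b_j b_i + ⁅b_i, b_j⁆`, applied to
`X^M`, then expresses the correction to `b_i X^J` through `C` in degree `|M| < |J|`. -/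
noncomputable def nextCorrection (C : L →ₗ[R] Module.End R (MvPolynomial I R)) :
    L →ₗ[R] Module.End R (MvPolynomial I R) :=
  b.constr R fun i ↦ (basisMonomials I R).constr R fun J ↦
    if h : ∃ j ∈ J.support, j < i then
      let j := J.support.min' (h.imp fun _ ↦ And.left)
      let p := monomial (J - Finsupp.single j 1) 1
      twistedMul b C (b j) (C (b i) p) + twistedMul b C ⁅b i, b j⁆ p
    else 0

variable (C : L →ₗ[R] Module.End R (MvPolynomial I R))

lemma nextCorrection_monomial_of_le {i : I} {J : I →₀ ℕ} (h : ∀ k ∈ J.support, i ≤ k) :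
    nextCorrection b C (b i) (monomial J 1) = 0 := by
  rw [nextCorrection, Module.Basis.constr_basis, constr_monomial, dif_neg]
  rintro ⟨j, hj, hji⟩
  exact (h j hj).not_gt hji

lemma nextCorrection_monomial_of_lt {i j : I} {M : I →₀ ℕ} (hji : j < i)
    (hM : ∀ k ∈ M.support, j ≤ k) :
    nextCorrection b C (b i) (monomial (Finsupp.single j 1 + M) 1) =
      twistedMul b C (b j) (C (b i) (monomial M 1)) +
        twistedMul b C ⁅b i, b j⁆ (monomial M 1) := by
  have hj : j ∈ (Finsupp.single j 1 + M).support := by simp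
  have hmin : (Finsupp.single j 1 + M).support.min' ⟨j, hj⟩ = j :=
    le_antisymm (Finset.min'_le _ _ hj)
      (Finset.le_min' _ _ _ (forall_mem_support_single_add.2 ⟨le_rfl, hM⟩))
  rw [nextCorrection, Module.Basis.constr_basis, constr_monomial, dif_pos ⟨j, hj, hji⟩]
  simp only [hmin, add_tsub_cancel_left]

variable {C}

lemma DegreeNonincreasing.nextCorrection (hC : DegreeNonincreasing C) :
    DegreeNonincreasing (nextCorrection b C) := fun d x p ↦ by
  refine apply_apply_mem_of_basis b _ (fun i J hJ ↦ ?_) x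
  rcases le_or_exists_eq_single_add i J with h | ⟨j, M, rfl, hji, hM⟩
  · rw [nextCorrection_monomial_of_le b C h]
    exact zero_mem _
  · rw [nextCorrection_monomial_of_lt b C hji hM]
    have hp : (monomial M 1 : MvPolynomial I R) ∈ restrictTotalDegree I R M.degree :=
      monomial_mem_restrictTotalDegree le_rfl
    refine restrictTotalDegree_mono ?_
      (add_mem (hC.twistedMul_mem (b j) (hC _ (b i) _ hp)) (hC.twistedMul_mem ⁅b i, b j⁆ hp))
    simpa [add_comm] using hJ

lemma nextCorrection_congr {C' : L →ₗ[R] Module.End R (MvPolynomial I R)} {d : ℕ}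
    (hC : DegreeNonincreasing C)
    (h : ∀ e < d, ∀ x, ∀ p ∈ restrictTotalDegree I R e, C x p = C' x p) (x : L)
    {p : MvPolynomial I R} (hp : p ∈ restrictTotalDegree I R d) :
    nextCorrection b C x p = nextCorrection b C' x p := by
  refine apply_apply_eq_of_basis b (fun i J hJ ↦ ?_) x hp
  rcases le_or_exists_eq_single_add i J with hi | ⟨j, M, rfl, hji, hM⟩
  · rw [nextCorrection_monomial_of_le b C hi, nextCorrection_monomial_of_le b C' hi]
  · have hMd : M.degree < d := by
      rw [map_add, Finsupp.degree_single] at hJ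
      lia
    have hp : (monomial M 1 : MvPolynomial I R) ∈ restrictTotalDegree I R M.degree :=
      monomial_mem_restrictTotalDegree le_rfl
    simp only [nextCorrection_monomial_of_lt b _ hji hM, twistedMul_apply, ← h _ hMd _ _ hp,
      ← h _ hMd _ _ (hC _ (b i) _ hp)]

lemma degreeNonincreasing_iterate_nextCorrection (m : ℕ) :
    DegreeNonincreasing ((nextCorrection b)^[m] 0) := by
  induction m with
  | zero => exact fun _ _ _ _ ↦ zero_mem _
  | succ m ih =>
    rw [Function.iterate_succ_apply']
    exact ih.nextCorrection b

lemma iterate_nextCorrection_apply_eq {m n d : ℕ} (hm : d < m) (hn : d < n) (x : L)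
    {p : MvPolynomial I R} (hp : p ∈ restrictTotalDegree I R d) :
    (nextCorrection b)^[m] 0 x p = (nextCorrection b)^[n] 0 x p := by
  induction d using Nat.strong_induction_on generalizing m n x p with
  | _ d ih =>
    obtain ⟨m, rfl⟩ := Nat.exists_eq_add_of_lt hm
    obtain ⟨n, rfl⟩ := Nat.exists_eq_add_of_lt hn
    rw [Function.iterate_succ_apply', Function.iterate_succ_apply']
    exact nextCorrection_congr b (degreeNonincreasing_iterate_nextCorrection b _)
      (fun e he x p hp ↦ ih e he (by lia) (by lia) x hp) x hp

/-- The fixed point of `nextCorrection`: since `nextCorrection` only looks at smaller degrees, its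
iterates starting from `0` are eventually constant on each monomial. -/
noncomputable def correction : L →ₗ[R] Module.End R (MvPolynomial I R) :=
  b.constr R fun i ↦ (basisMonomials I R).constr R fun J ↦
    (nextCorrection b)^[J.degree + 1] 0 (b i) (monomial J 1)

lemma correction_apply_eq_iterate {m d : ℕ} (hm : d < m) (x : L) {p : MvPolynomial I R}
    (hp : p ∈ restrictTotalDegree I R d) :
    correction b x p = (nextCorrection b)^[m] 0 x p := by
  refine apply_apply_eq_of_basis b (fun i J hJ ↦ ?_) x hp
  rw [correction, Module.Basis.constr_basis, constr_monomial]
  exact iterate_nextCorrection_apply_eq b J.degree.lt_succ_self (hJ.trans_lt hm) (b i)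
    (monomial_mem_restrictTotalDegree le_rfl)

lemma degreeNonincreasing_correction : DegreeNonincreasing (correction b) := fun d x p hp ↦ by
  rw [correction_apply_eq_iterate b d.lt_succ_self x hp]
  exact degreeNonincreasing_iterate_nextCorrection b _ d x p hp

lemma nextCorrection_correction_apply (x : L) {d : ℕ} {p : MvPolynomial I R}
    (hp : p ∈ restrictTotalDegree I R d) :
    nextCorrection b (correction b) x p = correction b x p := by
  rw [correction_apply_eq_iterate b (d + 1).lt_succ_self x (restrictTotalDegree_mono d.le_succ hp),
    Function.iterate_succ_apply']
  exact nextCorrection_congr b (degreeNonincreasing_correction b)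
    (fun e he x p hp ↦ correction_apply_eq_iterate b (he.trans d.lt_succ_self) x hp) x hp

/-- The action of `L` on `R[X_i]` modelled on left multiplication in `U(L)` written in the basis of
ordered monomials: `b_i X^J = X_i X^J` when `i` is at most every index occurring in `J`. -/
noncomputable def orderedAction : L →ₗ[R] Module.End R (MvPolynomial I R) :=
  twistedMul b (correction b)

lemma orderedAction_apply (x : L) (p : MvPolynomial I R) :
    orderedAction b x p = linearForm b x * p + correction b x p := rfl

lemma orderedAction_mem (x : L) {d : ℕ} {p : MvPolynomial I R}
    (hp : p ∈ restrictTotalDegree I R d) :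
    orderedAction b x p ∈ restrictTotalDegree I R (d + 1) :=
  (degreeNonincreasing_correction b).twistedMul_mem x hp

lemma correction_monomial_of_le {i : I} {J : I →₀ ℕ} (h : ∀ k ∈ J.support, i ≤ k) :
    correction b (b i) (monomial J 1) = 0 := by
  rw [← nextCorrection_correction_apply b _ (monomial_mem_restrictTotalDegree le_rfl),
    nextCorrection_monomial_of_le b _ h]

lemma correction_monomial_of_lt {i j : I} {M : I →₀ ℕ} (hji : j < i)
    (hM : ∀ k ∈ M.support, j ≤ k) :
    correction b (b i) (monomial (Finsupp.single j 1 + M) 1) =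
      orderedAction b (b j) (correction b (b i) (monomial M 1)) +
        orderedAction b ⁅b i, b j⁆ (monomial M 1) := by
  rw [← nextCorrection_correction_apply b _ (monomial_mem_restrictTotalDegree le_rfl),
    nextCorrection_monomial_of_lt b _ hji hM, orderedAction]

lemma orderedAction_monomial_of_le {i : I} {J : I →₀ ℕ} (h : ∀ k ∈ J.support, i ≤ k) :
    orderedAction b (b i) (monomial J 1) = monomial (Finsupp.single i 1 + J) 1 := by
  rw [orderedAction_apply, correction_monomial_of_le b h, linearForm_basis, X_mul_monomial,
    add_zero]

lemma curvature_orderedAction_apply (x y : L) (p : MvPolynomial I R) :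
    curvature (orderedAction b) x y p = orderedAction b x (orderedAction b y p) -
      orderedAction b y (orderedAction b x p) - orderedAction b ⁅x, y⁆ p := rfl

lemma curvature_orderedAction_monomial_of_lt {i j : I} {M : I →₀ ℕ} (hji : j < i)
    (hM : ∀ k ∈ M.support, j ≤ k) :
    curvature (orderedAction b) (b i) (b j) (monomial M 1) = 0 := by
  have hiM : orderedAction b (b i) (monomial M 1) =
      monomial (Finsupp.single i 1 + M) 1 + correction b (b i) (monomial M 1) := by
    rw [orderedAction_apply, linearForm_basis, X_mul_monomial]
  have hjiM : orderedAction b (b j) (monomial (Finsupp.single i 1 + M) 1) =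
      X i * monomial (Finsupp.single j 1 + M) 1 := by
    rw [orderedAction_monomial_of_le b (forall_mem_support_single_add.2 ⟨hji.le, hM⟩),
      X_mul_monomial, add_left_comm]
  rw [curvature_orderedAction_apply, hiM, map_add, hjiM, orderedAction_monomial_of_le b hM,
    orderedAction_apply, correction_monomial_of_lt b hji hM, linearForm_basis]
  abel

-- Write `X^J = b_k X^M`. In the Bianchi identity for `b_i, b_j, b_k` applied to `X^M`, all other
-- terms vanish, either because they live in degree `|M|` or because `k` is minimal.
lemma curvature_orderedAction_monomial_single_add {i j k : I} {M : I →₀ ℕ} (hki : k < i)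
    (hkj : k < j) (hM : ∀ l ∈ M.support, k ≤ l)
    (hflat : ∀ x y, ∀ p ∈ restrictTotalDegree I R M.degree, curvature (orderedAction b) x y p = 0) :
    curvature (orderedAction b) (b i) (b j) (monomial (Finsupp.single k 1 + M) 1) = 0 := by
  have hp : (monomial M 1 : MvPolynomial I R) ∈ restrictTotalDegree I R M.degree :=
    monomial_mem_restrictTotalDegree le_rfl
  have hk {l m : I} (hl : k < l) (hm : k < m) :
      curvature (orderedAction b) (b l) (b k) (orderedAction b (b m) (monomial M 1)) = 0 := by
    rw [orderedAction_apply, map_add, linearForm_basis, X_mul_monomial,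
      curvature_orderedAction_monomial_of_lt b hl
        (forall_mem_support_single_add.2 ⟨hm.le, hM⟩),
      hflat _ _ _ (degreeNonincreasing_correction b _ _ _ hp), add_zero]
  have bianchi := LinearMap.congr_fun
    (curvature_bianchi (orderedAction b) (b i) (b j) (b k)) (monomial M 1)
  rw [← curvature_skew _ (b k)] at bianchi
  simp only [LinearMap.add_apply, LieRing.of_associative_ring_bracket, LinearMap.sub_apply,
    Module.End.mul_apply, LinearMap.neg_apply, LinearMap.zero_apply, hflat _ _ _ hp, hk hki hkj,
    hk hkj hki, map_zero, neg_zero, sub_zero, add_zero] at bianchi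
  rwa [orderedAction_monomial_of_le b hM] at bianchi

lemma curvature_orderedAction_eq_zero (d : ℕ) (x y : L) (p : MvPolynomial I R)
    (hp : p ∈ restrictTotalDegree I R d) : curvature (orderedAction b) x y p = 0 := by
  induction d using Nat.strong_induction_on generalizing x y p with
  | _ d ih =>
    have hlt {i j : I} {J : I →₀ ℕ} (hji : j < i) (hJ : J.degree ≤ d) :
        curvature (orderedAction b) (b i) (b j) (monomial J 1) = 0 := by
      rcases le_or_exists_eq_single_add j J with hj | ⟨k, M, rfl, hkj, hM⟩
      · exact curvature_orderedAction_monomial_of_lt b hji hj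
      · refine curvature_orderedAction_monomial_single_add b (hkj.trans hji) hkj hM (ih _ ?_)
        rw [map_add, Finsupp.degree_single] at hJ
        lia
    have hbasis (i j : I) (J : I →₀ ℕ) (hJ : J.degree ≤ d) :
        curvature (orderedAction b) (b i) (b j) (monomial J 1) = 0 := by
      rcases lt_trichotomy i j with hij | rfl | hji
      · rw [← curvature_skew, LinearMap.neg_apply, hlt hij hJ, neg_zero]
      · rw [curvature_self, LinearMap.zero_apply]
      · exact hlt hji hJ
    refine apply_apply_eq_of_basis b (f := curvature (orderedAction b) x) (g := 0)
      (fun j J hJ ↦ ?_) y hp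
    exact apply_apply_eq_of_basis b (f := (curvature (orderedAction b)).flip (b j)) (g := 0)
      (fun i J hJ ↦ hbasis i j J hJ) x (monomial_mem_restrictTotalDegree hJ)

lemma orderedAction_lie (x y : L) :
    orderedAction b ⁅x, y⁆ = ⁅orderedAction b x, orderedAction b y⁆ := by
  have hflat : curvature (orderedAction b) x y = 0 := LinearMap.ext fun p ↦
    curvature_orderedAction_eq_zero b p.totalDegree x y p ((mem_restrictTotalDegree _ _ _).2 le_rfl)
  exact (sub_eq_zero.1 hflat).symm

/-- `orderedAction` as a representation of `L`. -/
noncomputable def orderedRep : L →ₗ⁅R⁆ Module.End R (MvPolynomial I R) where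
  __ := orderedAction b
  map_lie' := orderedAction_lie b _ _

/-- The action of `U(L)` on `1 ∈ R[X_i]`. -/
noncomputable def toMvPolynomial : UniversalEnvelopingAlgebra R L →ₗ[R] MvPolynomial I R :=
  LinearMap.applyₗ (1 : MvPolynomial I R) ∘ₗ
    (UniversalEnvelopingAlgebra.lift R (orderedRep b)).toLinearMap

lemma toMvPolynomial_one : toMvPolynomial b 1 = 1 := by
  simp [toMvPolynomial]

lemma toMvPolynomial_ι_mul (x : L) (u : UniversalEnvelopingAlgebra R L) :
    toMvPolynomial b (ι R x * u) = orderedAction b x (toMvPolynomial b u) := by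
  simp only [toMvPolynomial, LinearMap.comp_apply, AlgHom.toLinearMap_apply, map_mul, lift_ι_apply]
  rfl

lemma toMvPolynomial_list_prod_mem (l : List L) :
    toMvPolynomial b (l.map (ι R)).prod ∈ restrictTotalDegree I R l.length := by
  induction l with
  | nil => simp [toMvPolynomial_one, mem_restrictTotalDegree]
  | cons x l ih =>
    rw [List.map_cons, List.prod_cons, toMvPolynomial_ι_mul]
    exact orderedAction_mem b x ih

lemma toMvPolynomial_list_prod_sub_mem (x : L) (l : List L) :
    toMvPolynomial b ((x :: l).map (ι R)).prod - ((x :: l).map (linearForm b)).prod ∈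
      restrictTotalDegree I R l.length := by
  have expand (x : L) (l : List L) :
      toMvPolynomial b ((x :: l).map (ι R)).prod - ((x :: l).map (linearForm b)).prod =
        linearForm b x * (toMvPolynomial b (l.map (ι R)).prod - (l.map (linearForm b)).prod) +
          correction b x (toMvPolynomial b (l.map (ι R)).prod) := by
    simp only [List.map_cons, List.prod_cons, toMvPolynomial_ι_mul, orderedAction_apply]
    ring
  have hcorrection (x : L) (l : List L) :
      correction b x (toMvPolynomial b (l.map (ι R)).prod) ∈ restrictTotalDegree I R l.length :=
    degreeNonincreasing_correction b _ x _ (toMvPolynomial_list_prod_mem b l)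
  rw [expand]
  refine add_mem ?_ (hcorrection x l)
  induction l generalizing x with
  | nil => simp [toMvPolynomial_one]
  | cons y l ih =>
    rw [expand]
    exact linearForm_mul_mem b x (add_mem (ih y) (hcorrection y l))

end Action

section Filtration

variable {K L : Type*} [Field K] [LieRing L] [LieAlgebra K L]

lemma ofFn_ι_prod {m : ℕ} (f : Fin m → L) :
    (List.ofFn fun i ↦ (ι K (f i) : UniversalEnvelopingAlgebra K L)).prod =
      ((List.ofFn f).map (ι K)).prod := by
  rw [List.map_ofFn]
  rfl

lemma ueaFiltration_eq_span_list_prod (n : ℕ) : ueaFiltration K L n =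
    Submodule.span K ((fun l : List L ↦ (l.map (ι K)).prod) '' {l | l.length ≤ n}) := by
  unfold ueaFiltration
  congr 1
  ext u
  constructor
  · rintro ⟨m, f, hm, rfl⟩
    exact ⟨List.ofFn f, by simpa using hm, (ofFn_ι_prod f).symm⟩
  · rintro ⟨l, hl, rfl⟩
    exact ⟨l.length, l.get, hl, by rw [ofFn_ι_prod, List.ofFn_get]⟩

lemma list_prod_mem_ueaFiltration {l : List L} {n : ℕ} (hl : l.length ≤ n) :
    (l.map (ι K)).prod ∈ ueaFiltration K L n := by
  rw [ueaFiltration_eq_span_list_prod]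
  exact Submodule.subset_span ⟨l, hl, rfl⟩

lemma ueaFiltration_le_iff {n : ℕ} {N : Submodule K (UniversalEnvelopingAlgebra K L)} :
    ueaFiltration K L n ≤ N ↔ ∀ l : List L, l.length ≤ n → (l.map (ι K)).prod ∈ N := by
  rw [ueaFiltration_eq_span_list_prod, Submodule.span_le, Set.image_subset_iff]
  rfl

lemma ι_mul_mem_ueaFiltration (x : L) {n : ℕ} {u : UniversalEnvelopingAlgebra K L}
    (hu : u ∈ ueaFiltration K L n) : ι K x * u ∈ ueaFiltration K L (n + 1) := by
  have hle : ueaFiltration K L n ≤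
      (ueaFiltration K L (n + 1)).comap (LinearMap.mulLeft K (ι K x)) :=
    ueaFiltration_le_iff.2 fun l hl ↦
      list_prod_mem_ueaFiltration (l := x :: l) (Nat.succ_le_succ hl)
  exact hle hu

lemma list_prod_sub_mem_ueaFiltration_of_perm {l₁ l₂ : List L} (h : l₁.Perm l₂) {n : ℕ}
    (hn : l₁.length ≤ n + 1) :
    (l₁.map (ι K)).prod - (l₂.map (ι K)).prod ∈ ueaFiltration K L n := by
  induction h generalizing n with
  | nil => simp
  | @cons x l₁ l₂ h ih =>
    simp only [List.map_cons, List.prod_cons, ← mul_sub]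
    cases n with
    | zero =>
      obtain rfl : l₁ = [] := by simpa using hn
      obtain rfl : l₂ = [] := by simpa using h
      simp
    | succ n => exact ι_mul_mem_ueaFiltration x (ih (by simpa using hn))
  | swap x y l =>
    have hcommutator : ((y :: x :: l).map (ι K)).prod - ((x :: y :: l).map (ι K)).prod =
        ((⁅y, x⁆ :: l).map (ι K)).prod := by
      simp only [List.map_cons, List.prod_cons, LieHom.map_lie,
        LieRing.of_associative_ring_bracket, sub_mul, mul_assoc]
    rw [hcommutator]
    exact list_prod_mem_ueaFiltration (by simpa using hn)
  | trans h₁ _ ih₁ ih₂ =>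
    rw [← sub_add_sub_cancel]
    exact add_mem (ih₁ hn) (ih₂ (h₁.length_eq ▸ hn))

end Filtration

section SymmetricPower

variable {K L : Type*} [Field K] [LieRing L] [LieAlgebra K L]

lemma mk_tprod_comp_perm {n : ℕ} (f : Fin (n + 1) → L) (σ : Equiv.Perm (Fin (n + 1))) :
    (symRelSpan K L n).mkQ (PiTensorProduct.tprod K (f ∘ σ)) =
      (symRelSpan K L n).mkQ (PiTensorProduct.tprod K f) := by
  rw [eq_comm, Submodule.mkQ_apply, Submodule.mkQ_apply, Submodule.Quotient.eq]
  exact Submodule.subset_span ⟨σ, f, rfl⟩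

lemma span_range_mk_tprod (n : ℕ) :
    Submodule.span K (Set.range fun f : Fin (n + 1) → L ↦
      (symRelSpan K L n).mkQ (PiTensorProduct.tprod K f)) = ⊤ := by
  rw [Set.range_comp' (symRelSpan K L n).mkQ, Submodule.span_image,
    PiTensorProduct.span_tprod_eq_top, Submodule.map_top, Submodule.range_mkQ]

/-- Multiplication `L × ⋯ × L → U(L)` as a multilinear map. -/
noncomputable def ιProd (K L : Type*) [Field K] [LieRing L] [LieAlgebra K L] (m : ℕ) :
    MultilinearMap K (fun _ : Fin m ↦ L) (UniversalEnvelopingAlgebra K L) :=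
  (MultilinearMap.mkPiAlgebraFin K m (UniversalEnvelopingAlgebra K L)).compLinearMap
    fun _ ↦ (ι K).toLinearMap

lemma ιProd_apply {m : ℕ} (f : Fin m → L) : ιProd K L m f = ((List.ofFn f).map (ι K)).prod :=
  ofFn_ι_prod f

/-- The natural map `S^{n+1}(L) → U(L)^{≤n+1} / U(L)^{≤n}` induced by multiplication, with values
in `U(L) / U(L)^{≤n}`. -/
noncomputable def symmetricPowerToQuotient (K L : Type*) [Field K] [LieRing L] [LieAlgebra K L]
    (n : ℕ) : (TensorPower K (n + 1) L ⧸ symRelSpan K L n) →ₗ[K]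
      (UniversalEnvelopingAlgebra K L ⧸ ueaFiltration K L n) :=
  (symRelSpan K L n).mapQ (ueaFiltration K L n) (PiTensorProduct.lift (ιProd K L (n + 1))) <| by
    rw [symRelSpan, Submodule.span_le]
    rintro _ ⟨σ, f, rfl⟩
    rw [SetLike.mem_coe, Submodule.mem_comap, map_sub, PiTensorProduct.lift.tprod,
      PiTensorProduct.lift.tprod, ιProd_apply, ιProd_apply]
    exact list_prod_sub_mem_ueaFiltration_of_perm (Equiv.Perm.ofFn_comp_perm σ f).symm (by simp)

lemma symmetricPowerToQuotient_mk_tprod (n : ℕ) (f : Fin (n + 1) → L) :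
    symmetricPowerToQuotient K L n ((symRelSpan K L n).mkQ (PiTensorProduct.tprod K f)) =
      (ueaFiltration K L n).mkQ ((List.ofFn f).map (ι K)).prod := by
  rw [symmetricPowerToQuotient, Submodule.mkQ_apply, Submodule.mapQ_apply,
    PiTensorProduct.lift.tprod, ιProd_apply, Submodule.mkQ_apply]

variable {I : Type*} (b : Module.Basis I K L)

/-- The projection `K[X_i] → S^{n+1}(L)` sending `∏ k, X_{v k}` to the class of `⨂ k, b_{v k}` and
killing the monomials of degree other than `n + 1`. -/
noncomputable def toSymmetricPower (n : ℕ) :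
    MvPolynomial I K →ₗ[K] (TensorPower K (n + 1) L ⧸ symRelSpan K L n) :=
  (basisMonomials I K).constr K <| Function.extend
    (fun v : Fin (n + 1) → I ↦ ∑ k, Finsupp.single (v k) 1)
    (fun v ↦ (symRelSpan K L n).mkQ (PiTensorProduct.tprod K (b ∘ v))) 0

lemma toSymmetricPower_prod_X {n : ℕ} (v : Fin (n + 1) → I) :
    toSymmetricPower b n (∏ k, X (v k)) =
      (symRelSpan K L n).mkQ (PiTensorProduct.tprod K (b ∘ v)) := by
  have hmonomial : (∏ k, X (v k) : MvPolynomial I K) =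
      monomial (∑ k, Finsupp.single (v k) 1) 1 := by
    rw [monomial_sum_one]
    rfl
  rw [hmonomial, toSymmetricPower, constr_monomial, Function.FactorsThrough.extend_apply]
  intro v w hvw
  obtain ⟨σ, rfl⟩ := exists_perm_of_sum_single_eq hvw
  exact mk_tprod_comp_perm (b ∘ w) σ

lemma toSymmetricPower_prod_linearForm {n : ℕ} (f : Fin (n + 1) → L) :
    toSymmetricPower b n ((List.ofFn f).map (linearForm b)).prod =
      (symRelSpan K L n).mkQ (PiTensorProduct.tprod K f) := by
  have hmultilinear : (toSymmetricPower b n).compMultilinearMap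
      ((MultilinearMap.mkPiAlgebra K (Fin (n + 1)) (MvPolynomial I K)).compLinearMap
        fun _ ↦ linearForm b) =
      (symRelSpan K L n).mkQ.compMultilinearMap (PiTensorProduct.tprod K) :=
    Module.Basis.ext_multilinear (fun _ ↦ b) fun v ↦ by
      simpa [Function.comp_def] using toSymmetricPower_prod_X b v
  rw [List.map_ofFn, List.prod_ofFn]
  simpa using congrArg (· f) hmultilinear

lemma toSymmetricPower_eq_zero {n : ℕ} {p : MvPolynomial I K}
    (hp : p ∈ restrictTotalDegree I K n) : toSymmetricPower b n p = 0 := by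
  have hle : restrictTotalDegree I K n ≤ LinearMap.ker (toSymmetricPower b n) := by
    rw [restrictTotalDegree_eq_span, Submodule.span_le]
    rintro _ ⟨J, hJ, rfl⟩
    rw [SetLike.mem_coe, LinearMap.mem_ker, toSymmetricPower, constr_monomial,
      Function.extend_apply', Pi.zero_apply]
    rintro ⟨v, rfl⟩
    simp at hJ
  exact hle hp

end SymmetricPower

section Symbol

variable {K L I : Type*} [Field K] [LieRing L] [LieAlgebra K L] [LinearOrder I]
  (b : Module.Basis I K L)

/-- The principal symbol of order `n + 1`, as a linear map on all of `U(L)`; only its restriction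
to `U(L)^{≤n+1}` is independent of the ordered basis `b`. -/
noncomputable def symbol (n : ℕ) : UniversalEnvelopingAlgebra K L →ₗ[K]
    (TensorPower K (n + 1) L ⧸ symRelSpan K L n) :=
  toSymmetricPower b n ∘ₗ toMvPolynomial b

lemma symbol_list_prod {n : ℕ} (f : Fin (n + 1) → L) :
    symbol b n ((List.ofFn f).map (ι K)).prod =
      (symRelSpan K L n).mkQ (PiTensorProduct.tprod K f) := by
  rw [← toSymmetricPower_prod_linearForm b f, symbol, LinearMap.comp_apply, ← sub_eq_zero,
    ← map_sub]
  apply toSymmetricPower_eq_zero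
  simpa [List.ofFn_succ] using
    toMvPolynomial_list_prod_sub_mem b (f 0) (List.ofFn fun i : Fin n ↦ f i.succ)

lemma symbol_eq_zero {n : ℕ} {u : UniversalEnvelopingAlgebra K L} (hu : u ∈ ueaFiltration K L n) :
    symbol b n u = 0 := by
  have hle : ueaFiltration K L n ≤ LinearMap.ker (symbol b n) :=
    ueaFiltration_le_iff.2 fun l hl ↦ toSymmetricPower_eq_zero b
      (restrictTotalDegree_mono hl (toMvPolynomial_list_prod_mem b l))
  exact hle hu

lemma symmetricPowerToQuotient_symbol {n : ℕ} {u : UniversalEnvelopingAlgebra K L}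
    (hu : u ∈ ueaFiltration K L (n + 1)) :
    symmetricPowerToQuotient K L n (symbol b n u) = (ueaFiltration K L n).mkQ u := by
  have hle : ueaFiltration K L (n + 1) ≤
      LinearMap.eqLocus (symmetricPowerToQuotient K L n ∘ₗ symbol b n)
        (ueaFiltration K L n).mkQ := by
    refine ueaFiltration_le_iff.2 fun l hl ↦ ?_
    rw [LinearMap.mem_eqLocus, LinearMap.comp_apply]
    rcases hl.lt_or_eq with hlt | heq
    · have hmem := list_prod_mem_ueaFiltration (K := K) (Nat.le_of_lt_succ hlt)
      rw [symbol_eq_zero b hmem, map_zero, eq_comm, Submodule.mkQ_apply,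
        Submodule.Quotient.mk_eq_zero]
      exact hmem
    · obtain ⟨f, rfl⟩ : ∃ f : Fin (n + 1) → L, List.ofFn f = l :=
        heq ▸ ⟨l.get, List.ofFn_get l⟩
      rw [symbol_list_prod, symmetricPowerToQuotient_mk_tprod]
  exact hle hu

lemma symbol_eq_zero_iff {n : ℕ} {u : UniversalEnvelopingAlgebra K L}
    (hu : u ∈ ueaFiltration K L (n + 1)) : symbol b n u = 0 ↔ u ∈ ueaFiltration K L n := by
  refine ⟨fun h ↦ ?_, symbol_eq_zero b⟩
  rw [← Submodule.Quotient.mk_eq_zero, ← Submodule.mkQ_apply,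
    ← symmetricPowerToQuotient_symbol b hu, h, map_zero]

lemma symbol_surjective (n : ℕ) :
    Function.Surjective (symbol b n ∘ₗ (ueaFiltration K L (n + 1)).subtype) := by
  rw [← LinearMap.range_eq_top, eq_top_iff, ← span_range_mk_tprod, Submodule.span_le]
  rintro _ ⟨f, rfl⟩
  exact ⟨⟨_, list_prod_mem_ueaFiltration (l := List.ofFn f) (by simp)⟩, symbol_list_prod b f⟩

end Symbol

end PBW

theorem pbw_graded_shortExact_general {K L : Type*} [Field K]
    [LieRing L] [LieAlgebra K L] (n : ℕ) :
    ∃ g : ↥(ueaFiltration K L (n + 1)) →ₗ[K]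
        (TensorPower K (n + 1) L ⧸ symRelSpan K L n),
      Function.Surjective g ∧
      LinearMap.ker g = (ueaFiltration K L n).comap (ueaFiltration K L (n + 1)).subtype ∧
      ∀ (f : Fin (n + 1) → L)
        (hx : (List.ofFn fun i =>
          (UniversalEnvelopingAlgebra.ι K (f i) : UniversalEnvelopingAlgebra K L)).prod ∈
            ueaFiltration K L (n + 1)),
        g ⟨_, hx⟩ = Submodule.Quotient.mk (PiTensorProduct.tprod K f) := by
  obtain ⟨_, -⟩ := exists_wellFoundedLT (Module.Basis.ofVectorSpaceIndex K L)
  let b := Module.Basis.ofVectorSpace K L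
  refine ⟨PBW.symbol b n ∘ₗ (ueaFiltration K L (n + 1)).subtype, PBW.symbol_surjective b n,
    ?_, fun f _ ↦ ?_⟩
  · ext ⟨u, hu⟩
    exact PBW.symbol_eq_zero_iff b hu
  · exact (congrArg (PBW.symbol b n) (PBW.ofFn_ι_prod f)).trans (PBW.symbol_list_prod b f)

/-- (Graded piece of the PBW filtration.)  For a Lie algebra `L` over a field of
characteristic zero, for each `n ≥ 0` there is a short exact sequence
`0 → U(L)^{≤n} → U(L)^{≤n+1} → S^{n+1}(L) → 0`, where the surjection sends the
class of a product `ι(f 1)⋯ι(f (n+1))` to the class of `f 1 ⊗ ⋯ ⊗ f (n+1)` in the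
symmetric power (coinvariants of the permutation action on the tensor power). -/
theorem pbw_graded_shortExact {K L : Type*} [Field K] [CharZero K]
    [LieRing L] [LieAlgebra K L] (n : ℕ) :
    ∃ g : ↥(ueaFiltration K L (n + 1)) →ₗ[K]
        (TensorPower K (n + 1) L ⧸ symRelSpan K L n),
      Function.Surjective g ∧
      LinearMap.ker g = (ueaFiltration K L n).comap (ueaFiltration K L (n + 1)).subtype ∧
      ∀ (f : Fin (n + 1) → L)
        (hx : (List.ofFn fun i =>
          (UniversalEnvelopingAlgebra.ι K (f i) : UniversalEnvelopingAlgebra K L)).prod ∈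
            ueaFiltration K L (n + 1)),
        g ⟨_, hx⟩ = Submodule.Quotient.mk (PiTensorProduct.tprod K f) := by
  exact pbw_graded_shortExact_general n
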